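/- arXiv:1901.01150 — 2 statements merged into one kernel-verified Lean document; each statement's English description precedes it below -/
import Mathlib

section
/- Let f : ℝⁿ → [0,∞] be radial, f(x) = f₀(|x|), and let 0 < α < n. Then the Riesz potential (I_n^α f)(x) is radial, equal for |x| = r to 2^{−α} r^{2−n} (I^{α/2}_{+,2} s^{n−α−2} I^{α/2}_{−,2} f₀)(r), where I^{α/2}_{±,2} are the Erdélyi–Kober fractional integrals. -/
open MeasureTheory Set ENNReal

/-- The Erdélyi–Kober fractional integral of the first kind. -/
noncomputable def EKplus (β : ℝ) (g : ℝ → ℝ≥0∞) (t : ℝ) : ℝ≥0∞ :=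
  ENNReal.ofReal (2 / Real.Gamma β) *
    ∫⁻ r in Ioo (0:ℝ) t, ENNReal.ofReal ((t ^ 2 - r ^ 2) ^ (β - 1) * r) * g r

/-- The Erdélyi–Kober fractional integral of the second kind. -/
noncomputable def EKminus (β : ℝ) (g : ℝ → ℝ≥0∞) (t : ℝ) : ℝ≥0∞ :=
  ENNReal.ofReal (2 / Real.Gamma β) *
    ∫⁻ r in Ioi t, ENNReal.ofReal ((r ^ 2 - t ^ 2) ^ (β - 1) * r) * g r

/-!
Both sides are integrals of `f₀` against measures on `[0, ∞)` that do not depend on `f₀`. Such a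
measure is determined by its integrals against Gaussians `exp (-p * t ^ 2)`, because polynomials
in `exp (-p₀ * t ^ 2)` separate points. For a Gaussian, writing `|x - y| ^ (α - n)` as a
superposition of the Gaussians `exp (-l * |x - y| ^ 2)` and completing the square turns the Riesz
potential into a single integral over `l`; the substitution `l = p * s ^ 2 / (r ^ 2 - s ^ 2)` turns
the Erdélyi–Kober composition into the same integral.
-/

open Module Real Function
open scoped BoundedContinuousFunction NNReal

section Moments

variable {E : Type*} [TopologicalSpace E] [PolishSpace E] [MeasurableSpace E] [BorelSpace E]
  {μ ν : Measure E}

theorem measure_ext_of_forall_integral_pow_eq [IsFiniteMeasure μ] [IsFiniteMeasure ν]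
    (u : E →ᵇ ℝ) (hu : Injective u) (h : ∀ k : ℕ, ∫ x, u x ^ k ∂μ = ∫ x, u x ^ k ∂ν) :
    μ = ν := by
  let A : StarSubalgebra ℝ (E →ᵇ ℝ) :=
    { (Polynomial.aeval (R := ℝ) u).range with
      star_mem' := fun {g} hg => by
        rwa [show star g = g from BoundedContinuousFunction.ext fun _ => rfl] }
  refine ext_of_forall_mem_subalgebra_integral_eq_of_polish (A := A) ?separates ?integral
  case separates =>
    intro x y hxy
    exact ⟨u, ⟨_, ⟨u, ⟨Polynomial.X, Polynomial.aeval_X u⟩, rfl⟩, rfl⟩, hu.ne hxy⟩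
  case integral =>
    rintro _ ⟨q, rfl⟩
    induction q using Polynomial.induction_on' with
    | add q₁ q₂ h₁ h₂ =>
      simp_all [integral_add, BoundedContinuousFunction.integrable]
    | monomial k c =>
      simp [Polynomial.aeval_monomial, integral_const_mul, h k]

theorem measure_ext_of_forall_lintegral_pow_succ_eq (u : E →ᵇ ℝ) (hu : Injective u)
    (hpos : ∀ x, 0 < u x) (hfin : ∫⁻ x, ENNReal.ofReal (u x) ∂μ ≠ ∞)
    (h : ∀ k : ℕ, ∫⁻ x, ENNReal.ofReal (u x ^ (k + 1)) ∂μ =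
      ∫⁻ x, ENNReal.ofReal (u x ^ (k + 1)) ∂ν) :
    μ = ν := by
  set w : E → ℝ≥0∞ := fun x => ENNReal.ofReal (u x)
  have hw : Measurable w := u.continuous.measurable.ennreal_ofReal
  have hw_ne_zero : ∀ x, w x ≠ 0 := fun x => by simpa [w] using hpos x
  have moment (κ : Measure E) (k : ℕ) : ∫ x, u x ^ k ∂κ.withDensity w =
      (∫⁻ x, ENNReal.ofReal (u x ^ (k + 1)) ∂κ).toReal := by
    rw [integral_eq_lintegral_of_nonneg_ae (.of_forall fun x => (pow_pos (hpos x) k).le)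
        (by fun_prop), lintegral_withDensity_eq_lintegral_mul _ hw (by fun_prop)]
    simp only [Pi.mul_apply, w, ← ENNReal.ofReal_mul (hpos _).le, pow_succ']
  have hfin' : ∫⁻ x, w x ∂ν ≠ ∞ := by simpa [w] using (h 0).symm.trans_ne (by simpa using hfin)
  have : IsFiniteMeasure (μ.withDensity w) := isFiniteMeasure_withDensity hfin
  have : IsFiniteMeasure (ν.withDensity w) := isFiniteMeasure_withDensity hfin'
  have weighted : μ.withDensity w = ν.withDensity w :=
    measure_ext_of_forall_integral_pow_eq u hu fun k => by rw [moment, moment, h]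
  have unweight (κ : Measure E) : (κ.withDensity w).withDensity w⁻¹ = κ :=
    withDensity_inv_same hw (.of_forall hw_ne_zero) (.of_forall fun _ => ENNReal.ofReal_ne_top)
  rw [← unweight μ, weighted, unweight]

end Moments

theorem measure_ext_of_forall_lintegral_gaussian_eq {μ ν : Measure ℝ≥0} {p₀ : ℝ} (hp₀ : 0 < p₀)
    (hfin : ∫⁻ t, ENNReal.ofReal (exp (-p₀ * (t : ℝ) ^ 2)) ∂μ ≠ ∞)
    (h : ∀ p, p₀ ≤ p → ∫⁻ t, ENNReal.ofReal (exp (-p * (t : ℝ) ^ 2)) ∂μ =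
      ∫⁻ t, ENNReal.ofReal (exp (-p * (t : ℝ) ^ 2)) ∂ν) :
    μ = ν := by
  let u : ℝ≥0 →ᵇ ℝ := .ofNormedAddCommGroup (fun t => exp (-p₀ * (t : ℝ) ^ 2)) (by fun_prop) 1
    fun t => by simpa [abs_of_pos (exp_pos _)] using by positivity
  have hu : Injective u := fun s t hst => by
    simpa [u, hp₀.ne'] using hst
  refine measure_ext_of_forall_lintegral_pow_succ_eq u hu (fun _ => exp_pos _) hfin fun k => ?_
  have hpow (t : ℝ≥0) : u t ^ (k + 1) = exp (-((k + 1) * p₀) * (t : ℝ) ^ 2) := by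
    simp only [u, BoundedContinuousFunction.coe_ofNormedAddCommGroup, ← exp_nat_mul]
    push_cast
    ring_nf
  simp only [hpow]
  exact h _ (le_mul_of_one_le_left hp₀.le (by simp))

section ErdelyiKober

/-- The kernel `(t² - s²)₊ ^ (β - 1)` shared by the two Erdélyi–Kober integrals. Truncating it to
`s < t` lets both be written as integrals over `(0, ∞)`. -/
noncomputable def ekKernel (β s t : ℝ) : ℝ≥0∞ :=
  if s < t then ENNReal.ofReal ((t ^ 2 - s ^ 2) ^ (β - 1)) else 0

variable {f g : ℝ → ℝ≥0∞}

@[fun_prop]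
theorem measurable_ekKernel (β : ℝ) : Measurable (uncurry (ekKernel β)) :=
  .ite (measurableSet_lt measurable_fst measurable_snd) (by fun_prop) measurable_const

theorem EKplus_eq_lintegral_ekKernel (β : ℝ) (g : ℝ → ℝ≥0∞) (t : ℝ) :
    EKplus β g t = ENNReal.ofReal (2 / Gamma β) *
      ∫⁻ s in Ioi 0, ENNReal.ofReal s * (ekKernel β s t * g s) := by
  rw [EKplus, ← Ioi_inter_Iio, inter_comm, ← setLIntegral_indicator measurableSet_Iio]
  congr 1
  refine setLIntegral_congr_fun measurableSet_Ioi fun s hs => ?_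
  by_cases hst : s < t <;>
    simp [hst, ekKernel, ENNReal.ofReal_mul' (le_of_lt hs), mul_left_comm, mul_assoc]

theorem EKminus_eq_lintegral_ekKernel (β : ℝ) (f : ℝ → ℝ≥0∞) {s : ℝ} (hs : 0 ≤ s) :
    EKminus β f s = ENNReal.ofReal (2 / Gamma β) *
      ∫⁻ t in Ioi 0, ENNReal.ofReal t * (ekKernel β s t * f t) := by
  rw [EKminus, ← sup_of_le_left hs, ← Ioi_inter_Ioi, ← setLIntegral_indicator measurableSet_Ioi,
    sup_of_le_left hs]
  congr 1
  refine setLIntegral_congr_fun measurableSet_Ioi fun t ht => ?_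
  by_cases hst : s < t <;>
    simp [hst, ekKernel, ENNReal.ofReal_mul' (le_of_lt ht), mul_left_comm, mul_assoc]

theorem measurable_EKplus (β : ℝ) (hg : Measurable g) : Measurable (EKplus β g) := by
  have hF : Measurable fun z : ℝ × ℝ => ENNReal.ofReal z.2 * (ekKernel β z.2 z.1 * g z.2) := by
    fun_prop
  simpa only [funext (EKplus_eq_lintegral_ekKernel β g)] using
    (hF.lintegral_prod_right' (ν := volume.restrict (Ioi 0))).const_mul _

theorem lintegral_mul_EKminus (β : ℝ) (hf : Measurable f) (hg : Measurable g) :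
    ∫⁻ s in Ioi 0, ENNReal.ofReal s * (g s * EKminus β f s) =
      ∫⁻ t in Ioi 0, ENNReal.ofReal t * (EKplus β g t * f t) := by
  set c := ENNReal.ofReal (2 / Gamma β)
  set F : ℝ → ℝ → ℝ≥0∞ := fun s t =>
    c * (ENNReal.ofReal s * ENNReal.ofReal t * ekKernel β s t * g s * f t)
  have inner_t (s : ℝ) (hs : s ∈ Ioi 0) :
      ENNReal.ofReal s * (g s * EKminus β f s) = ∫⁻ t in Ioi 0, F s t := by
    rw [EKminus_eq_lintegral_ekKernel β f (le_of_lt hs), ← lintegral_const_mul c (by fun_prop),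
      ← lintegral_const_mul _ (by fun_prop), ← lintegral_const_mul _ (by fun_prop)]
    exact lintegral_congr fun t => by ring
  have inner_s (t : ℝ) : ENNReal.ofReal t * (EKplus β g t * f t) = ∫⁻ s in Ioi 0, F s t := by
    rw [EKplus_eq_lintegral_ekKernel, ← lintegral_const_mul c (by fun_prop),
      ← lintegral_mul_const _ (by fun_prop), ← lintegral_const_mul _ (by fun_prop)]
    exact lintegral_congr fun s => by ring
  simp only [setLIntegral_congr_fun measurableSet_Ioi inner_t, inner_s]
  exact lintegral_lintegral_swap (by fun_prop)

theorem exists_measure_lintegral_eq_EKplus_mul_EKminus (β γ r : ℝ) (hg : Measurable g) :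
    ∃ ν : Measure ℝ≥0, ∀ f : ℝ → ℝ≥0∞, Measurable f →
      ∫⁻ t, f t ∂ν = EKplus β (fun s => g s * EKminus γ f s) r := by
  set k : ℝ → ℝ≥0∞ := fun s => ekKernel β s r * g s
  have hk : Measurable k := by fun_prop
  have hw : Measurable fun t => ENNReal.ofReal t * EKplus γ k t :=
    ENNReal.measurable_ofReal.mul (measurable_EKplus γ hk)
  refine ⟨(ENNReal.ofReal (2 / Gamma β) • (volume.restrict (Ioi 0)).withDensity
    fun t => ENNReal.ofReal t * EKplus γ k t).map toNNReal, fun f hf => ?_⟩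
  rw [lintegral_map (by fun_prop) measurable_real_toNNReal, lintegral_smul_measure,
    lintegral_withDensity_eq_lintegral_mul _ hw (by fun_prop), EKplus_eq_lintegral_ekKernel,
    smul_eq_mul]
  congr 1
  calc
    _ = ∫⁻ t in Ioi 0, ENNReal.ofReal t * (EKplus γ k t * f t) :=
      setLIntegral_congr_fun measurableSet_Ioi fun t ht => by
        simp only [Pi.mul_apply, coe_toNNReal t (le_of_lt ht), mul_assoc]
    _ = ∫⁻ s in Ioi 0, ENNReal.ofReal s * (k s * EKminus γ f s) :=
      (lintegral_mul_EKminus γ hf hk).symm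
    _ = _ := by simp only [k, mul_assoc]

end ErdelyiKober

section GammaBeta

theorem lintegral_rpow_mul_exp_neg_mul_Ioi {a q : ℝ} (ha : 0 < a) (hq : 0 < q) :
    ∫⁻ t in Ioi 0, ENNReal.ofReal (t ^ (a - 1) * exp (-(q * t))) =
      ENNReal.ofReal (q ^ (-a) * Gamma a) := by
  have hval : ∫ t in Ioi 0, t ^ (a - 1) * exp (-(q * t)) = q ^ (-a) * Gamma a := by
    rw [integral_rpow_mul_exp_neg_mul_Ioi ha hq, one_div, inv_rpow hq.le, rpow_neg hq.le]
  have hint : IntegrableOn (fun t => t ^ (a - 1) * exp (-(q * t))) (Ioi 0) :=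
    .of_integral_ne_zero (by rw [hval]; positivity)
  have hnonneg : ∀ᵐ t ∂volume.restrict (Ioi (0 : ℝ)), 0 ≤ t ^ (a - 1) * exp (-(q * t)) := by
    filter_upwards [self_mem_ae_restrict measurableSet_Ioi] with t ht
    exact mul_nonneg (rpow_nonneg (le_of_lt ht) _) (exp_nonneg _)
  rw [← hval, ofReal_integral_eq_lintegral_ofReal hint hnonneg]

theorem ofReal_rpow_neg_eq_lintegral {a q : ℝ} (ha : 0 < a) (hq : 0 < q) :
    ENNReal.ofReal (q ^ (-a)) = ENNReal.ofReal (1 / Gamma a) *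
      ∫⁻ t in Ioi 0, ENNReal.ofReal (t ^ (a - 1) * exp (-(q * t))) := by
  rw [lintegral_rpow_mul_exp_neg_mul_Ioi ha hq, ← ENNReal.ofReal_mul (by positivity)]
  congr 1
  field_simp

theorem ofReal_rpow_neg_two_mul_eq_lintegral {a q : ℝ} (ha : 0 < a) (hq : 0 < q) :
    ENNReal.ofReal (q ^ (-(2 * a))) = ENNReal.ofReal (1 / Gamma a) *
      ∫⁻ t in Ioi 0, ENNReal.ofReal (t ^ (a - 1) * exp (-(q ^ 2 * t))) := by
  rw [← ofReal_rpow_neg_eq_lintegral ha (pow_pos hq 2), ← Real.rpow_two, ← Real.rpow_mul hq.le,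
    mul_neg]

theorem lintegral_rpow_mul_add_rpow_Ioi {a b p : ℝ} (ha : 0 < a) (hb : 0 < b) (hp : 0 < p) :
    ∫⁻ l in Ioi 0, ENNReal.ofReal (l ^ (a - 1) * (p + l) ^ (-(a + b))) =
      ENNReal.ofReal (p ^ (-b) * (Gamma a * Gamma b / Gamma (a + b))) := by
  set c := ENNReal.ofReal (1 / Gamma (a + b))
  set F : ℝ → ℝ → ℝ≥0∞ := fun l t =>
    ENNReal.ofReal (t ^ (a + b - 1) * exp (-(p * t))) *
      ENNReal.ofReal (l ^ (a - 1) * exp (-(t * l)))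
  have inner_t (l : ℝ) (hl : l ∈ Ioi 0) :
      ENNReal.ofReal (l ^ (a - 1) * (p + l) ^ (-(a + b))) = c * ∫⁻ t in Ioi 0, F l t := by
    have hl : 0 < l := hl
    rw [ENNReal.ofReal_mul (by positivity),
      ofReal_rpow_neg_eq_lintegral (add_pos ha hb) (add_pos hp hl), mul_left_comm,
      ← lintegral_const_mul _ (by fun_prop)]
    congr 1
    refine setLIntegral_congr_fun measurableSet_Ioi fun t (ht : 0 < t) => ?_
    simp only [F, ← ENNReal.ofReal_mul (rpow_nonneg hl.le _), ← ENNReal.ofReal_mul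
      (mul_nonneg (rpow_nonneg ht.le _) (exp_nonneg _)), add_mul, neg_add, exp_add]
    ring_nf
  have inner_l (t : ℝ) (ht : t ∈ Ioi 0) :
      ∫⁻ l in Ioi 0, F l t = ENNReal.ofReal (Gamma a) *
        ENNReal.ofReal (t ^ (b - 1) * exp (-(p * t))) := by
    have ht : 0 < t := ht
    have hpow : t ^ (b - 1) = t ^ (a + b - 1) * t ^ (-a) := by
      rw [← rpow_add ht]; ring_nf
    rw [lintegral_const_mul _ (by fun_prop), lintegral_rpow_mul_exp_neg_mul_Ioi ha ht, hpow,
      ← ENNReal.ofReal_mul (by positivity), ← ENNReal.ofReal_mul (by positivity)]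
    ring_nf
  rw [setLIntegral_congr_fun measurableSet_Ioi inner_t, lintegral_const_mul' _ _ ofReal_ne_top,
    lintegral_lintegral_swap (by fun_prop), setLIntegral_congr_fun measurableSet_Ioi inner_l,
    lintegral_const_mul _ (by fun_prop), lintegral_rpow_mul_exp_neg_mul_Ioi hb hp,
    ← ENNReal.ofReal_mul (by positivity), ← ENNReal.ofReal_mul (by positivity)]
  ring_nf

end GammaBeta

section Subordination

/-- The integral over the subordination parameter `l` to which both the Riesz potential and the
Erdélyi–Kober composition of the Gaussian `exp (-p * t ^ 2)` reduce. -/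
noncomputable def subordinationIntegral (a b p r : ℝ) : ℝ≥0∞ :=
  ∫⁻ l in Ioi 0,
    ENNReal.ofReal (l ^ (a - 1) * (p + l) ^ (-(a + b)) * exp (-(p * l / (p + l)) * r ^ 2))

theorem subordinationIntegral_ne_top {a b p : ℝ} (ha : 0 < a) (hb : 0 < b) (hp : 0 < p) (r : ℝ) :
    subordinationIntegral a b p r ≠ ∞ := by
  have bound : subordinationIntegral a b p r ≤
      ∫⁻ l in Ioi 0, ENNReal.ofReal (l ^ (a - 1) * (p + l) ^ (-(a + b))) := by
    refine setLIntegral_mono' measurableSet_Ioi fun l (hl : 0 < l) => ENNReal.ofReal_le_ofReal ?_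
    refine mul_le_of_le_one_right (by positivity) (exp_le_one_iff.2 ?_)
    rw [neg_mul, neg_nonpos]
    positivity
  rw [lintegral_rpow_mul_add_rpow_Ioi ha hb hp] at bound
  exact ne_top_of_le_ne_top ENNReal.ofReal_ne_top bound

theorem lintegral_Ioi_comp_sq_sub_sq {s : ℝ} (hs : 0 ≤ s) (g : ℝ → ℝ≥0∞) :
    ∫⁻ t in Ioi s, ENNReal.ofReal (2 * t) * g (t ^ 2 - s ^ 2) = ∫⁻ τ in Ioi 0, g τ := by
  have himage : (fun t : ℝ => t ^ 2 - s ^ 2) '' Ioi s = Ioi 0 := by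
    ext τ
    constructor
    · rintro ⟨t, ht, rfl⟩
      exact sub_pos.2 (pow_lt_pow_left₀ ht hs two_ne_zero)
    · intro hτ
      have hτ : 0 < τ := hτ
      refine ⟨√(τ + s ^ 2), lt_sqrt_of_sq_lt (by linarith), ?_⟩
      simp [sq_sqrt (by positivity : 0 ≤ τ + s ^ 2)]
  rw [← himage]
  refine (lintegral_image_eq_lintegral_deriv_mul_of_monotoneOn measurableSet_Ioi ?_ ?_ g).symm
  · exact fun t _ => by simpa using ((hasDerivAt_pow 2 t).sub_const (s ^ 2)).hasDerivWithinAt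
  · exact fun t ht u _ htu =>
      sub_le_sub_right (pow_le_pow_left₀ (hs.trans (le_of_lt ht)) htu 2) _

theorem lintegral_Ioo_comp_mul_sq_div {p r : ℝ} (hp : 0 < p) (hr : 0 < r) (g : ℝ → ℝ≥0∞) :
    ∫⁻ s in Ioo 0 r, ENNReal.ofReal (2 * p * s * r ^ 2 / (r ^ 2 - s ^ 2) ^ 2) *
      g (p * s ^ 2 / (r ^ 2 - s ^ 2)) = ∫⁻ l in Ioi 0, g l := by
  have hpos {s : ℝ} (hs : s ∈ Ioo 0 r) : 0 < r ^ 2 - s ^ 2 :=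
    sub_pos.2 (pow_lt_pow_left₀ hs.2 hs.1.le two_ne_zero)
  have himage : (fun s : ℝ => p * s ^ 2 / (r ^ 2 - s ^ 2)) '' Ioo 0 r = Ioi 0 := by
    ext l
    constructor
    · rintro ⟨s, hs, rfl⟩
      exact div_pos (mul_pos hp (pow_pos hs.1 2)) (hpos hs)
    · intro hl
      have hl : 0 < l := hl
      have hsqrt : √(l / (p + l)) < 1 := by
        rw [sqrt_lt' one_pos, one_pow, div_lt_one (by positivity)]
        linarith
      refine ⟨r * √(l / (p + l)), ⟨by positivity, mul_lt_of_lt_one_right hr hsqrt⟩, ?_⟩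
      have hden : r ^ 2 - r ^ 2 * (l / (p + l)) = r ^ 2 * p / (p + l) := by
        field_simp
        ring
      simp only [mul_pow, sq_sqrt (by positivity : 0 ≤ l / (p + l)), hden]
      field_simp
  rw [← himage]
  refine (lintegral_image_eq_lintegral_deriv_mul_of_monotoneOn measurableSet_Ioo ?_ ?_ g).symm
  · intro s hs
    refine (((hasDerivAt_pow 2 s).const_mul p).div ((hasDerivAt_pow 2 s).const_sub (r ^ 2))
      (hpos hs).ne').hasDerivWithinAt.congr_deriv ?_
    congr 1
    push_cast
    ring
  · intro s hs t ht hst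
    have := hs.1
    have := hpos ht
    dsimp only
    gcongr

theorem EKminus_gaussian {b p s : ℝ} (hb : 0 < b) (hp : 0 < p) (hs : 0 ≤ s) :
    EKminus b (fun t => ENNReal.ofReal (exp (-p * t ^ 2))) s =
      ENNReal.ofReal (p ^ (-b)) * ENNReal.ofReal (exp (-p * s ^ 2)) := by
  have hintegrand (t : ℝ) (ht : t ∈ Ioi s) :
      ENNReal.ofReal ((t ^ 2 - s ^ 2) ^ (b - 1) * t) * ENNReal.ofReal (exp (-p * t ^ 2)) =
        ENNReal.ofReal (exp (-p * s ^ 2) / 2) * (ENNReal.ofReal (2 * t) *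
          ENNReal.ofReal ((t ^ 2 - s ^ 2) ^ (b - 1) * exp (-(p * (t ^ 2 - s ^ 2))))) := by
    have ht0 : 0 < t := hs.trans_lt ht
    have hexp : exp (-p * t ^ 2) = exp (-p * s ^ 2) * exp (-(p * (t ^ 2 - s ^ 2))) := by
      rw [← exp_add]
      ring_nf
    have hd : 0 < t ^ 2 - s ^ 2 := sub_pos.2 (pow_lt_pow_left₀ ht hs two_ne_zero)
    simp (disch := positivity) only [← ENNReal.ofReal_mul, hexp]
    ring_nf
  rw [EKminus, setLIntegral_congr_fun measurableSet_Ioi hintegrand,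
    lintegral_const_mul' _ _ ofReal_ne_top,
    lintegral_Ioi_comp_sq_sub_sq hs fun τ => ENNReal.ofReal (τ ^ (b - 1) * exp (-(p * τ))),
    lintegral_rpow_mul_exp_neg_mul_Ioi hb hp]
  simp (disch := positivity) only [← ENNReal.ofReal_mul]
  congr 1
  field_simp

theorem rpow_subordination_jacobian (a b : ℝ) {p s d r : ℝ} (hp : 0 < p) (hs : 0 < s) (hd : 0 < d)
    (hr : 0 < r) :
    p ^ b * r ^ (2 * (a + b) - 2) * (p * s * r ^ 2 / d ^ 2 *
      ((p * s ^ 2 / d) ^ (a - 1) * (p * r ^ 2 / d) ^ (-(a + b)))) =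
    d ^ (b - 1) * s * s ^ (2 * a - 2) := by
  -- In logarithmic coordinates the identity is linear in the exponents.
  obtain ⟨P, rfl⟩ : ∃ P, exp P = p := ⟨log p, exp_log hp⟩
  obtain ⟨S, rfl⟩ : ∃ S, exp S = s := ⟨log s, exp_log hs⟩
  obtain ⟨D, rfl⟩ : ∃ D, exp D = d := ⟨log d, exp_log hd⟩
  obtain ⟨R, rfl⟩ : ∃ R, exp R = r := ⟨log r, exp_log hr⟩
  simp only [← exp_nat_mul, ← exp_add, ← exp_sub, ← exp_mul]
  push_cast
  ring_nf

theorem EKplus_rpow_mul_gaussian {b p r : ℝ} (a : ℝ) (hb : 0 < b) (hp : 0 < p) (hr : 0 < r) :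
    EKplus b (fun s => ENNReal.ofReal (s ^ (2 * a - 2)) * ENNReal.ofReal (exp (-p * s ^ 2))) r =
      ENNReal.ofReal (p ^ b * r ^ (2 * (a + b) - 2) / Gamma b) * subordinationIntegral a b p r := by
  rw [EKplus, subordinationIntegral, ← lintegral_Ioo_comp_mul_sq_div hp hr,
    ← lintegral_const_mul' _ _ ofReal_ne_top, ← lintegral_const_mul' _ _ ofReal_ne_top]
  refine setLIntegral_congr_fun measurableSet_Ioo fun s hs => ?_
  have hs0 : 0 < s := hs.1
  have hd : 0 < r ^ 2 - s ^ 2 := sub_pos.2 (pow_lt_pow_left₀ hs.2 hs0.le two_ne_zero)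
  have hsum : p + p * s ^ 2 / (r ^ 2 - s ^ 2) = p * r ^ 2 / (r ^ 2 - s ^ 2) := by
    field_simp
    ring
  have hexp : p * (p * s ^ 2 / (r ^ 2 - s ^ 2)) / (p * r ^ 2 / (r ^ 2 - s ^ 2)) * r ^ 2 =
      p * s ^ 2 := by
    field_simp
  simp (disch := positivity) only [← ENNReal.ofReal_mul, hsum, neg_mul, hexp]
  simp only [← mul_assoc, ← rpow_subordination_jacobian a b hp hs0 hd hr]
  ring_nf

theorem EKplus_rpow_mul_EKminus_gaussian {b p r : ℝ} (a : ℝ) (hb : 0 < b) (hp : 0 < p)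
    (hr : 0 < r) :
    EKplus b (fun s => ENNReal.ofReal (s ^ (2 * a - 2)) *
        EKminus b (fun t => ENNReal.ofReal (exp (-p * t ^ 2))) s) r =
      ENNReal.ofReal (r ^ (2 * (a + b) - 2) / Gamma b) * subordinationIntegral a b p r := by
  have hweight (s : ℝ) (hs : s ∈ Ioo 0 r) :
      ENNReal.ofReal ((r ^ 2 - s ^ 2) ^ (b - 1) * s) * (ENNReal.ofReal (s ^ (2 * a - 2)) *
        EKminus b (fun t => ENNReal.ofReal (exp (-p * t ^ 2))) s) =
      ENNReal.ofReal (p ^ (-b)) * (ENNReal.ofReal ((r ^ 2 - s ^ 2) ^ (b - 1) * s) *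
        (ENNReal.ofReal (s ^ (2 * a - 2)) * ENNReal.ofReal (exp (-p * s ^ 2)))) := by
    rw [EKminus_gaussian hb hp hs.1.le]
    ring
  rw [EKplus, setLIntegral_congr_fun measurableSet_Ioo hweight,
    lintegral_const_mul' _ _ ENNReal.ofReal_ne_top, mul_left_comm, ← EKplus,
    EKplus_rpow_mul_gaussian a hb hp hr, ← mul_assoc, ← ENNReal.ofReal_mul (by positivity)]
  congr 2
  rw [mul_div_assoc, ← mul_assoc, ← rpow_add hp, neg_add_cancel, Real.rpow_zero, one_mul]

end Subordination

section RieszPotential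

variable {E : Type*} [NormedAddCommGroup E] [InnerProductSpace ℝ E]

theorem mul_norm_sq_add_mul_norm_sub_sq {p l : ℝ} (h : p + l ≠ 0) (x y : E) :
    p * ‖y‖ ^ 2 + l * ‖x - y‖ ^ 2 =
      (p + l) * ‖y - (l / (p + l)) • x‖ ^ 2 + p * l / (p + l) * ‖x‖ ^ 2 := by
  rw [norm_sub_sq_real, norm_sub_sq_real, norm_smul, mul_pow, norm_eq_abs, sq_abs,
    real_inner_smul_right, real_inner_comm]
  field_simp
  ring

variable [FiniteDimensional ℝ E] [MeasurableSpace E] [BorelSpace E]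

theorem lintegral_exp_neg_mul_sq_norm {b : ℝ} (hb : 0 < b) :
    ∫⁻ v : E, ENNReal.ofReal (exp (-b * ‖v‖ ^ 2)) =
      ENNReal.ofReal ((π / b) ^ (finrank ℝ E / 2 : ℝ)) := by
  have hval := GaussianFourier.integral_rexp_neg_mul_sq_norm (V := E) hb
  have hint : Integrable fun v : E => exp (-b * ‖v‖ ^ 2) :=
    .of_integral_ne_zero (by rw [hval]; positivity)
  rw [← hval, ofReal_integral_eq_lintegral_ofReal hint (.of_forall fun _ => (exp_pos _).le)]

theorem lintegral_gaussian_mul_gaussian {p l : ℝ} (h : 0 < p + l) (x : E) :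
    ∫⁻ y, ENNReal.ofReal (exp (-p * ‖y‖ ^ 2)) * ENNReal.ofReal (exp (-(‖x - y‖ ^ 2 * l))) =
      ENNReal.ofReal ((π / (p + l)) ^ (finrank ℝ E / 2 : ℝ) *
        exp (-(p * l / (p + l)) * ‖x‖ ^ 2)) := by
  have complete_square (y : E) :
      ENNReal.ofReal (exp (-p * ‖y‖ ^ 2)) * ENNReal.ofReal (exp (-(‖x - y‖ ^ 2 * l))) =
        ENNReal.ofReal (exp (-(p + l) * ‖y - (l / (p + l)) • x‖ ^ 2)) *
          ENNReal.ofReal (exp (-(p * l / (p + l)) * ‖x‖ ^ 2)) := by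
    rw [← ENNReal.ofReal_mul (exp_nonneg _), ← ENNReal.ofReal_mul (exp_nonneg _), ← exp_add,
      ← exp_add]
    congr 2
    linear_combination -mul_norm_sq_add_mul_norm_sub_sq h.ne' x y
  simp only [complete_square]
  rw [lintegral_mul_const' _ _ ENNReal.ofReal_ne_top,
    lintegral_sub_right_eq_self (fun v : E => ENNReal.ofReal (exp (-(p + l) * ‖v‖ ^ 2))),
    lintegral_exp_neg_mul_sq_norm h, ← ENNReal.ofReal_mul (by positivity)]

/-- The normalizing constant `γₙ(α)` of the Riesz potential, with `n` allowed to be real. -/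
noncomputable def rieszConstant (n α : ℝ) : ℝ :=
  2 ^ α * π ^ (n / 2) * Gamma (α / 2) / Gamma ((n - α) / 2)

/-- The Riesz potential `I^α f` of a nonnegative function on a Euclidean space, whose dimension
`n` is `finrank ℝ E`. -/
noncomputable def rieszPotential (α : ℝ) (f : E → ℝ≥0∞) (x : E) : ℝ≥0∞ :=
  ENNReal.ofReal (1 / rieszConstant (finrank ℝ E) α) *
    ∫⁻ y, f y * ENNReal.ofReal (‖x - y‖ ^ (α - finrank ℝ E))

theorem lintegral_gaussian_mul_norm_sub_rpow [Nontrivial E] {s p : ℝ} (hs : 0 < s) (hp : 0 < p)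
    (x : E) :
    ∫⁻ y, ENNReal.ofReal (exp (-p * ‖y‖ ^ 2)) * ENNReal.ofReal (‖x - y‖ ^ (-(2 * s))) =
      ENNReal.ofReal (π ^ (finrank ℝ E / 2 : ℝ) / Gamma s) *
        subordinationIntegral s (finrank ℝ E / 2 - s) p ‖x‖ := by
  set c := ENNReal.ofReal (1 / Gamma s)
  set F : E → ℝ → ℝ≥0∞ := fun y l => ENNReal.ofReal (exp (-p * ‖y‖ ^ 2)) *
    ENNReal.ofReal (l ^ (s - 1) * exp (-(‖x - y‖ ^ 2 * l)))
  have inner_l : ∀ᵐ y, ENNReal.ofReal (exp (-p * ‖y‖ ^ 2)) *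
      ENNReal.ofReal (‖x - y‖ ^ (-(2 * s))) = c * ∫⁻ l in Ioi 0, F y l := by
    filter_upwards [Measure.ae_ne volume x] with y hy
    rw [ofReal_rpow_neg_two_mul_eq_lintegral hs (norm_sub_pos_iff.2 hy.symm), mul_left_comm,
      ← lintegral_const_mul' _ _ ENNReal.ofReal_ne_top]
  have inner_y (l : ℝ) (hl : l ∈ Ioi 0) : ∫⁻ y, F y l =
      ENNReal.ofReal (π ^ (finrank ℝ E / 2 : ℝ)) *
        ENNReal.ofReal (l ^ (s - 1) * (p + l) ^ (-(s + (finrank ℝ E / 2 - s))) *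
          exp (-(p * l / (p + l)) * ‖x‖ ^ 2)) := by
    have hl : 0 < l := hl
    simp only [F, ENNReal.ofReal_mul (rpow_nonneg hl.le _), mul_left_comm]
    rw [lintegral_const_mul' _ _ ENNReal.ofReal_ne_top,
      lintegral_gaussian_mul_gaussian (add_pos hp hl), ← ENNReal.ofReal_mul (by positivity),
      ← ENNReal.ofReal_mul (by positivity), div_rpow pi_pos.le (by positivity), add_sub_cancel,
      rpow_neg (by positivity)]
    ring_nf
  rw [lintegral_congr_ae inner_l, lintegral_const_mul' _ _ ENNReal.ofReal_ne_top,
    lintegral_lintegral_swap (by fun_prop), setLIntegral_congr_fun measurableSet_Ioi inner_y,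
    lintegral_const_mul' _ _ ENNReal.ofReal_ne_top, ← subordinationIntegral, ← mul_assoc,
    ← ENNReal.ofReal_mul (one_div_nonneg.2 (Gamma_pos_of_pos hs).le), one_div_mul_eq_div]

theorem rieszPotential_gaussian {α p : ℝ} (hα : 0 < α) (hαn : α < finrank ℝ E) (hp : 0 < p)
    (x : E) :
    rieszPotential α (fun y => ENNReal.ofReal (exp (-p * ‖y‖ ^ 2))) x =
      ENNReal.ofReal (2 ^ (-α) / Gamma (α / 2)) *
        subordinationIntegral ((finrank ℝ E - α) / 2) (α / 2) p ‖x‖ := by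
  have : Nontrivial E := Module.nontrivial_of_finrank_pos (R := ℝ) (by exact_mod_cast hα.trans hαn)
  have hs : 0 < (finrank ℝ E - α) / 2 := by linarith
  have hexponent : α - finrank ℝ E = -(2 * ((finrank ℝ E - α) / 2)) := by ring
  have hb : (finrank ℝ E : ℝ) / 2 - (finrank ℝ E - α) / 2 = α / 2 := by ring
  rw [rieszPotential, rieszConstant, hexponent, lintegral_gaussian_mul_norm_sub_rpow hs hp,
    hb, ← mul_assoc, ← ENNReal.ofReal_mul (by positivity), Real.rpow_neg zero_le_two]
  congr 2
  field_simp

theorem rieszPotential_gaussian_eq_EKplus {α p : ℝ} (hα : 0 < α) (hαn : α < finrank ℝ E)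
    (hp : 0 < p) {x : E} (hx : x ≠ 0) :
    rieszPotential α (fun y => ENNReal.ofReal (exp (-p * ‖y‖ ^ 2))) x =
      ENNReal.ofReal (2 ^ (-α) * ‖x‖ ^ (2 - finrank ℝ E : ℝ)) * EKplus (α / 2)
        (fun s => ENNReal.ofReal (s ^ (finrank ℝ E - α - 2)) *
          EKminus (α / 2) (fun t => ENNReal.ofReal (exp (-p * t ^ 2))) s) ‖x‖ := by
  have hr : 0 < ‖x‖ := norm_pos_iff.2 hx
  have hweight : finrank ℝ E - α - 2 = 2 * ((finrank ℝ E - α) / 2) - 2 := by ring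
  have hcancel : (2 - finrank ℝ E + (2 * ((finrank ℝ E - α) / 2 + α / 2) - 2) : ℝ) = 0 := by ring
  rw [rieszPotential_gaussian hα hαn hp, hweight,
    EKplus_rpow_mul_EKminus_gaussian _ (half_pos hα) hp hr, ← mul_assoc,
    ← ENNReal.ofReal_mul (by positivity), mul_div_assoc', mul_assoc, ← rpow_add hr, hcancel,
    Real.rpow_zero, mul_one]

theorem exists_measure_lintegral_eq_rieszPotential (α : ℝ) (x : E) :
    ∃ μ : Measure ℝ≥0, ∀ f : ℝ → ℝ≥0∞, Measurable f →
      ∫⁻ t, f t ∂μ = rieszPotential α (fun y => f ‖y‖) x := by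
  refine ⟨ENNReal.ofReal (1 / rieszConstant (finrank ℝ E) α) • ((volume : Measure E).withDensity
    fun y => ENNReal.ofReal (‖x - y‖ ^ (α - finrank ℝ E))).map nnnorm, fun f hf => ?_⟩
  rw [lintegral_smul_measure, lintegral_map (by fun_prop) measurable_nnnorm,
    lintegral_withDensity_eq_lintegral_mul _ (by fun_prop) (by fun_prop)]
  simp only [rieszPotential, Pi.mul_apply, coe_nnnorm, smul_eq_mul, mul_comm (f _)]

theorem riesz_radial_general {α : ℝ} (hα : 0 < α) (hαn : α < finrank ℝ E) {f₀ : ℝ → ℝ≥0∞}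
    (hf₀ : Measurable f₀) {x : E} (hx : x ≠ 0) :
    rieszPotential α (fun y => f₀ ‖y‖) x =
      ENNReal.ofReal (2 ^ (-α) * ‖x‖ ^ (2 - finrank ℝ E : ℝ)) * EKplus (α / 2)
        (fun s => ENNReal.ofReal (s ^ (finrank ℝ E - α - 2)) * EKminus (α / 2) f₀ s) ‖x‖ := by
  obtain ⟨μ, hμ⟩ := exists_measure_lintegral_eq_rieszPotential α x
  obtain ⟨ν, hν⟩ := exists_measure_lintegral_eq_EKplus_mul_EKminus (α / 2) (α / 2) ‖x‖
    (g := fun s => ENNReal.ofReal (s ^ (finrank ℝ E - α - 2))) (by fun_prop)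
  set c := ENNReal.ofReal (2 ^ (-α) * ‖x‖ ^ (2 - finrank ℝ E : ℝ))
  suffices hμν : μ = c • ν by
    rw [← hμ f₀ hf₀, ← hν f₀ hf₀, hμν, lintegral_smul_measure, smul_eq_mul]
  refine measure_ext_of_forall_lintegral_gaussian_eq one_pos ?finite fun p hp => ?gaussian
  case finite =>
    rw [hμ (fun t => ENNReal.ofReal (exp (-1 * t ^ 2))) (by fun_prop),
      rieszPotential_gaussian hα hαn one_pos]
    exact ENNReal.mul_ne_top ENNReal.ofReal_ne_top
      (subordinationIntegral_ne_top (by linarith) (by linarith) one_pos _)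
  case gaussian =>
    have hgauss : Measurable fun t : ℝ => ENNReal.ofReal (exp (-p * t ^ 2)) := by fun_prop
    rw [lintegral_smul_measure, hμ _ hgauss, hν _ hgauss, smul_eq_mul,
      rieszPotential_gaussian_eq_EKplus hα hαn (one_pos.trans_le hp) hx]

end RieszPotential

/-- For a radial nonnegative function `f(x) = f₀(|x|)` on `ℝⁿ` and `0 < α < n`, the Riesz
potential `I_n^α f` is radial and for `|x| = r` equals
`2^{−α} r^{2−n} (I^{α/2}_{+,2} s^{n−α−2} I^{α/2}_{−,2} f₀)(r)`. -/
theorem riesz_radial (n : ℕ) (hn : 1 ≤ n) (α : ℝ) (hα1 : 0 < α) (hα2 : α < n)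
    (f₀ : ℝ → ℝ≥0∞) (hmeas : Measurable f₀)
    (x : EuclideanSpace ℝ (Fin n)) (r : ℝ) (hr : 0 < r) (hxr : ‖x‖ = r) :
    ENNReal.ofReal
        (1 / (2 ^ α * Real.pi ^ ((n : ℝ) / 2) * Real.Gamma (α / 2) /
          Real.Gamma (((n : ℝ) - α) / 2))) *
      ∫⁻ y, f₀ ‖y‖ * ENNReal.ofReal (‖x - y‖ ^ (α - (n : ℝ)))
    = ENNReal.ofReal ((2 : ℝ) ^ (-α) * r ^ (2 - (n : ℝ))) *
        EKplus (α / 2)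
          (fun s => ENNReal.ofReal (s ^ ((n : ℝ) - α - 2)) * EKminus (α / 2) f₀ s) r := by
  subst hxr
  simpa only [rieszPotential, rieszConstant, finrank_euclideanSpace_fin] using
    riesz_radial_general hα1 (by simpa using hα2) hmeas (norm_pos_iff.1 hr)
end

section
/- Let m ≥ 1 and suppose f₀ : (0,∞) → [0,∞) is continuous with ∫₀ᵃ f₀(t) t^{n−j−1} dt < ∞ and ∫ₐ^∞ f₀(t) t^{k−1} dt < ∞ for some a > 0, where j, k ≥ 1 are even integers with ℓ = n−j−k ≥ 1. Then f₀ can be recovered from φ = I_{j,k} f₀ by f₀(t) = c̃₁^{−1} ((−D)^{k/2} r^{2−n+j+k} D^{j/2} s^{n−k−2} φ)(t) for all t > 0, where D = (1/(2t)) d/dt, c̃₁ = π^{k/2} Γ((n−k)/2)/Γ((n−j−k)/2), and the operators are applied right to left: multiply φ(s) by s^{n−k−2}, apply D j/2 times, multiply by r^{2−n+j+k}, apply (−D) k/2 times. -/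
open MeasureTheory Set

/-- The real Erdélyi–Kober fractional integral of the first kind. -/
noncomputable def EKplusR (β : ℝ) (g : ℝ → ℝ) (t : ℝ) : ℝ :=
  (2 / Real.Gamma β) * ∫ r in Ioo (0:ℝ) t, (t ^ 2 - r ^ 2) ^ (β - 1) * g r * r

/-- The real Erdélyi–Kober fractional integral of the second kind. -/
noncomputable def EKminusR (β : ℝ) (g : ℝ → ℝ) (t : ℝ) : ℝ :=
  (2 / Real.Gamma β) * ∫ r in Ioi t, (r ^ 2 - t ^ 2) ^ (β - 1) * g r * r

/-- The operator `D = (1/(2t)) d/dt`. -/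
noncomputable def Dop (g : ℝ → ℝ) : ℝ → ℝ := fun t => deriv g t / (2 * t)

/-- The operator `−D = −(1/(2t)) d/dt`. -/
noncomputable def negDop (g : ℝ → ℝ) : ℝ → ℝ := fun t => -(deriv g t / (2 * t))

/-- The mixed Radon transform of a radial profile,
`(I_{j,k} f₀)(s) = (c̃₁/s^{n−k−2}) (I^{j/2}_{+,2} r^{ℓ−2} I^{k/2}_{−,2} f₀)(s)` with
`c̃₁ = π^{k/2} Γ((n−k)/2)/Γ((n−j−k)/2)`. -/
noncomputable def IjkR (n j k ℓ : ℕ) (f₀ : ℝ → ℝ) (s : ℝ) : ℝ :=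
  ((Real.pi ^ ((k : ℝ) / 2) * Real.Gamma (((n : ℝ) - k) / 2) /
      Real.Gamma (((n : ℝ) - j - k) / 2)) / s ^ ((n : ℝ) - k - 2)) *
    EKplusR ((j : ℝ) / 2)
      (fun r => r ^ ((ℓ : ℝ) - 2) * EKminusR ((k : ℝ) / 2) f₀ r) s

/-!
The kernels of the Erdélyi–Kober integrals are truncated powers `x₊^(β-1)` of `t² - r²` and
`r² - t²`. Since `D` is differentiation in the variable `t²` and `d/dx x₊^γ = γ x₊^(γ-1)`, the
operators `D` and `-D` lower the order of the integrals of the first and second kind by one, and at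
order one they undo them by the fundamental theorem of calculus. Differentiation under the integral
sign is legitimate because `x₊^γ` is Lipschitz on every half-line `(-∞, M]` when `1 ≤ γ`.

Inverting the outer integral requires `r^(ℓ-1) (I^{k/2}_{-,2} f₀)(r)` to be integrable near `0`.
Since `|(I^{k/2}_{-,2} f₀)(r)|` is at most a constant times `∫_r^∞ |f₀(u)| u^(k-1) du`, Tonelli
reduces this to the integrability of `|f₀(u)| u^(k+ℓ-1)`, where `k + ℓ = n - j`.
-/

open Filter Topology

/-- The truncated power `x₊^γ`, the kernel of the Erdélyi–Kober integrals. It is `0` on `(-∞, 0]`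
for every `γ`, so that `x₊^0` is the Heaviside function (whereas `max x 0 ^ 0 = 1`). -/
noncomputable def truncPow (γ x : ℝ) : ℝ := (Ioi 0).indicator (· ^ γ) x

lemma truncPow_of_pos {γ x : ℝ} (hx : 0 < x) : truncPow γ x = x ^ γ :=
  indicator_of_mem hx _

lemma truncPow_of_nonpos {γ x : ℝ} (hx : x ≤ 0) : truncPow γ x = 0 :=
  indicator_of_notMem (notMem_Ioi.2 hx) _

lemma truncPow_nonneg (γ x : ℝ) : 0 ≤ truncPow γ x :=
  indicator_nonneg (fun _ hx => Real.rpow_nonneg (le_of_lt hx) γ) x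

lemma truncPow_eq_max_rpow {γ : ℝ} (hγ : γ ≠ 0) (x : ℝ) : truncPow γ x = max x 0 ^ γ := by
  rcases le_or_gt x 0 with hx | hx
  · rw [truncPow_of_nonpos hx, max_eq_right hx, Real.zero_rpow hγ]
  · rw [truncPow_of_pos hx, max_eq_left hx.le]

lemma monotone_truncPow {γ : ℝ} (hγ : 0 ≤ γ) : Monotone (truncPow γ) := by
  intro x y hxy
  rcases le_or_gt x 0 with hx | hx
  · exact (truncPow_of_nonpos hx).trans_le (truncPow_nonneg γ y)
  · rw [truncPow_of_pos hx, truncPow_of_pos (hx.trans_le hxy)]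
    exact Real.rpow_le_rpow hx.le hxy hγ

@[fun_prop]
lemma measurable_truncPow (γ : ℝ) : Measurable (truncPow γ) :=
  (measurable_id.pow_const γ).indicator measurableSet_Ioi

lemma hasDerivAt_truncPow {γ x : ℝ} (hx : x ≠ 0) :
    HasDerivAt (truncPow γ) (γ * truncPow (γ - 1) x) x := by
  rcases hx.lt_or_gt with hx | hx
  · rw [truncPow_of_nonpos hx.le, mul_zero]
    exact (hasDerivAt_const x 0).congr_of_eventuallyEq
      (eventually_of_mem (Iio_mem_nhds hx) fun y hy => truncPow_of_nonpos (le_of_lt hy))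
  · rw [truncPow_of_pos hx]
    exact (Real.hasDerivAt_rpow_const (.inl hx.ne')).congr_of_eventuallyEq
      (eventually_of_mem (Ioi_mem_nhds hx) fun y hy => truncPow_of_pos hy)

lemma abs_truncPow_sub_truncPow_le {γ M x y : ℝ} (hγ : 1 ≤ γ) (hx : x ≤ M) (hy : y ≤ M) :
    |truncPow γ x - truncPow γ y| ≤ γ * truncPow (γ - 1) M * |x - y| := by
  have hγ0 : γ ≠ 0 := by positivity
  rcases le_or_gt M 0 with hM | hM
  · simp [truncPow_of_nonpos, hM, hx.trans hM, hy.trans hM]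
  have hderiv (z : ℝ) (hz : z ∈ Icc 0 M) : ‖γ * z ^ (γ - 1)‖ ≤ γ * M ^ (γ - 1) := by
    have := hz.1
    rw [Real.norm_of_nonneg (by positivity)]
    gcongr
    exact hz.2
  rw [truncPow_eq_max_rpow hγ0, truncPow_eq_max_rpow hγ0, truncPow_of_pos hM]
  calc |max x 0 ^ γ - max y 0 ^ γ| ≤ γ * M ^ (γ - 1) * |max x 0 - max y 0| :=
        (convex_Icc 0 M).norm_image_sub_le_of_norm_hasDerivWithin_le
          (fun z _ => (Real.hasDerivAt_rpow_const (.inr hγ)).hasDerivWithinAt) hderiv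
          ⟨le_max_right _ _, max_le hy hM.le⟩ ⟨le_max_right _ _, max_le hx hM.le⟩
    _ ≤ γ * M ^ (γ - 1) * |x - y| := by
        exact mul_le_mul_of_nonneg_left (abs_max_sub_max_le_abs x y 0) (by positivity)

section TruncPowIntegral

variable {α : Type*} [MeasurableSpace α] {μ : Measure α} {ρ h : α → ℝ} {γ b x : ℝ}

lemma aestronglyMeasurable_truncPow_mul (hρ : Measurable ρ) (δ : ℝ) (hxb : x ≤ b)
    (hh : AEStronglyMeasurable (fun a => truncPow γ (b - ρ a) * h a) μ) :
    AEStronglyMeasurable (fun a => truncPow δ (x - ρ a) * h a) μ := by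
  have hfactor : (fun a => truncPow δ (x - ρ a) * h a) = fun a =>
      truncPow δ (x - ρ a) * truncPow (-γ) (b - ρ a) * (truncPow γ (b - ρ a) * h a) := by
    ext a
    rcases le_or_gt (x - ρ a) 0 with ha | ha
    · simp [truncPow_of_nonpos ha]
    · have hb : 0 < b - ρ a := by linarith
      rw [truncPow_of_pos hb, truncPow_of_pos hb, Real.rpow_neg hb.le]
      field_simp
  rw [hfactor]
  exact Measurable.aestronglyMeasurable (by fun_prop) |>.mul hh

lemma continuousAt_integral_truncPow (hγ : 0 ≤ γ) (hρ : Measurable ρ) (hxb : x < b)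
    (hx : ∀ᵐ a ∂μ, ρ a ≠ x) (hint : Integrable (fun a => truncPow γ (b - ρ a) * h a) μ) :
    ContinuousAt (fun y => ∫ a, truncPow γ (y - ρ a) * h a ∂μ) x := by
  refine continuousAt_of_dominated (bound := fun a => ‖truncPow γ (b - ρ a) * h a‖) ?_ ?_
    hint.norm ?_
  · filter_upwards [Iio_mem_nhds hxb] with y hy
    exact aestronglyMeasurable_truncPow_mul hρ γ (le_of_lt hy) hint.aestronglyMeasurable
  · filter_upwards [Iio_mem_nhds hxb] with y hy
    refine Eventually.of_forall fun a => ?_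
    rw [norm_mul, norm_mul, Real.norm_of_nonneg (truncPow_nonneg _ _),
      Real.norm_of_nonneg (truncPow_nonneg _ _)]
    gcongr
    exact monotone_truncPow hγ (sub_le_sub_right (le_of_lt hy) _)
  · filter_upwards [hx] with a ha
    have hcont := (hasDerivAt_truncPow (γ := γ) (sub_ne_zero.2 ha.symm)).continuousAt
    exact (hcont.comp (f := (· - ρ a)) (by fun_prop)).mul continuousAt_const

lemma hasDerivAt_integral_truncPow (hγ : 1 ≤ γ) (hρ : Measurable ρ) (hxb : x < b)
    (hx : ∀ᵐ a ∂μ, ρ a ≠ x) (hint : Integrable (fun a => truncPow γ (x - ρ a) * h a) μ)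
    (hint' : Integrable (fun a => truncPow (γ - 1) (b - ρ a) * h a) μ) :
    HasDerivAt (fun y => ∫ a, truncPow γ (y - ρ a) * h a ∂μ)
      (γ * ∫ a, truncPow (γ - 1) (x - ρ a) * h a ∂μ) x := by
  have hγ0 : 0 ≤ γ := zero_le_one.trans hγ
  have hmeas {δ y : ℝ} (hy : y ≤ b) := aestronglyMeasurable_truncPow_mul hρ δ hy hint'.1
  rw [← integral_const_mul]
  refine (hasDerivAt_integral_of_dominated_loc_of_lip
    (bound := fun a => γ * ‖truncPow (γ - 1) (b - ρ a) * h a‖) (Iio_mem_nhds hxb) ?_ hint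
    ((hmeas hxb.le).const_mul γ) ?_ (hint'.norm.const_mul γ) ?_).2
  · filter_upwards [Iio_mem_nhds hxb] with y hy using hmeas (le_of_lt hy)
  · refine Eventually.of_forall fun a => LipschitzOnWith.of_dist_le_mul fun y hy z hz => ?_
    have hpow := abs_truncPow_sub_truncPow_le hγ (sub_le_sub_right (le_of_lt hy) (ρ a))
      (sub_le_sub_right (le_of_lt hz) (ρ a))
    rw [sub_sub_sub_cancel_right] at hpow
    rw [Real.coe_nnabs, abs_of_nonneg (mul_nonneg hγ0 (norm_nonneg _)), Real.dist_eq,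
      Real.dist_eq, ← sub_mul]
    calc |(truncPow γ (y - ρ a) - truncPow γ (z - ρ a)) * h a|
        = |truncPow γ (y - ρ a) - truncPow γ (z - ρ a)| * |h a| := abs_mul _ _
      _ ≤ γ * truncPow (γ - 1) (b - ρ a) * |y - z| * |h a| :=
        mul_le_mul_of_nonneg_right hpow (abs_nonneg _)
      _ = γ * ‖truncPow (γ - 1) (b - ρ a) * h a‖ * |y - z| := by
        rw [norm_mul, Real.norm_of_nonneg (truncPow_nonneg _ _), Real.norm_eq_abs]
        ring
  · filter_upwards [hx] with a ha
    rw [← mul_assoc]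
    exact ((hasDerivAt_truncPow (sub_ne_zero.2 ha.symm)).comp_sub_const x (ρ a)).mul_const (h a)

end TruncPowIntegral

lemma ae_restrict_Ioi_sq_ne {s : ℝ} (hs : 0 < s) :
    ∀ᵐ r ∂volume.restrict (Ioi (0 : ℝ)), r ^ 2 ≠ s ^ 2 := by
  filter_upwards [ae_restrict_mem measurableSet_Ioi, ae_restrict_of_ae (volume.ae_ne s)]
    with r hr hrs hsq
  exact hrs ((sq_eq_sq₀ (le_of_lt hr) hs.le).1 hsq)

lemma truncPow_sq_sub_sq_of_lt (γ : ℝ) {x y : ℝ} (hx : 0 ≤ x) (hxy : x < y) :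
    truncPow γ (y ^ 2 - x ^ 2) = (y ^ 2 - x ^ 2) ^ γ :=
  truncPow_of_pos (sub_pos.2 (pow_lt_pow_left₀ hxy hx two_ne_zero))

lemma truncPow_sq_sub_sq_of_le (γ : ℝ) {x y : ℝ} (hy : 0 ≤ y) (hyx : y ≤ x) :
    truncPow γ (y ^ 2 - x ^ 2) = 0 :=
  truncPow_of_nonpos (sub_nonpos.2 (pow_le_pow_left₀ hy hyx 2))

section FirstKind

variable {β b s : ℝ} {g : ℝ → ℝ}

lemma EKplusR_eq_integral_truncPow (β : ℝ) (g : ℝ → ℝ) (hs : 0 < s) :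
    EKplusR β g s =
      2 / Real.Gamma β * ∫ r in Ioi 0, truncPow (β - 1) (s ^ 2 - r ^ 2) * (g r * r) := by
  have hvanish (r : ℝ) (hr : r ∈ Ioi 0 \ Ioo 0 s) :
      truncPow (β - 1) (s ^ 2 - r ^ 2) * (g r * r) = 0 := by
    have hsr : s ≤ r := not_lt.1 fun h => hr.2 ⟨hr.1, h⟩
    rw [truncPow_sq_sub_sq_of_le _ hs.le hsr, zero_mul]
  rw [EKplusR, setIntegral_eq_of_subset_of_forall_sdiff_eq_zero measurableSet_Ioi
    Ioo_subset_Ioi_self hvanish]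
  congr 1
  refine setIntegral_congr_fun measurableSet_Ioo fun r hr => ?_
  simp only [truncPow_sq_sub_sq_of_lt _ hr.1.le hr.2, mul_assoc]

lemma integrableOn_truncPow_sq_sub_mul {γ : ℝ} {h : ℝ → ℝ} (hγ : 0 ≤ γ) (hs : 0 < s)
    (hh : IntegrableOn h (Ioo 0 s)) :
    IntegrableOn (fun r => truncPow γ (s ^ 2 - r ^ 2) * h r) (Ioi 0) := by
  refine IntegrableOn.of_forall_sdiff_eq_zero (s := Ioo 0 s) ?_ measurableSet_Ioi ?_
  · refine Integrable.bdd_mul (c := truncPow γ (s ^ 2)) hh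
      (Measurable.aestronglyMeasurable (by fun_prop)) (Eventually.of_forall fun r => ?_)
    rw [Real.norm_of_nonneg (truncPow_nonneg _ _)]
    exact monotone_truncPow hγ (sub_le_self _ (sq_nonneg r))
  · intro r hr
    have hsr : s ≤ r := not_lt.1 fun h => hr.2 ⟨hr.1, h⟩
    rw [truncPow_sq_sub_sq_of_le _ hs.le hsr, zero_mul]

lemma hasDerivAt_EKplusR_add_one (hβ : 1 ≤ β) (hs : 0 < s) (hsb : s < b)
    (hg : IntegrableOn (fun r => g r * r) (Ioo 0 b)) :
    HasDerivAt (EKplusR (β + 1) g) (2 * s * EKplusR β g s) s := by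
  have hderiv := hasDerivAt_integral_truncPow (γ := β) (ρ := fun r => r ^ 2) (x := s ^ 2)
    (b := b ^ 2) (h := fun r => g r * r) hβ (by fun_prop)
    (pow_lt_pow_left₀ hsb hs.le two_ne_zero) (ae_restrict_Ioi_sq_ne hs)
    (integrableOn_truncPow_sq_sub_mul (by linarith) hs (hg.mono_set (Ioo_subset_Ioo_right hsb.le)))
    (integrableOn_truncPow_sq_sub_mul (by linarith) (hs.trans hsb) hg)
  have hsq : HasDerivAt (fun y : ℝ => y ^ 2) (2 * s) s := by simpa using hasDerivAt_pow 2 s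
  have hcomp := (hderiv.comp (h := fun y => y ^ 2) s hsq).const_mul (2 / Real.Gamma (β + 1))
  refine (hcomp.congr_of_eventuallyEq ?_).congr_deriv ?_
  · filter_upwards [Ioi_mem_nhds hs] with y hy
    simp only [EKplusR_eq_integral_truncPow _ g hy, add_sub_cancel_right, Function.comp_apply]
  · have hΓ : Real.Gamma β ≠ 0 := (Real.Gamma_pos_of_pos (by linarith)).ne'
    rw [EKplusR_eq_integral_truncPow β g hs, Real.Gamma_add_one (by positivity)]
    field_simp

lemma hasDerivAt_EKplusR_one (hs : 0 < s) (hsb : s < b)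
    (hg : IntegrableOn (fun r => g r * r) (Ioo 0 b)) (hc : ContinuousAt g s) :
    HasDerivAt (EKplusR 1 g) (2 * s * g s) s := by
  have hsmem : Ioo 0 b ∈ 𝓝 s := Ioo_mem_nhds hs hsb
  have hderiv := intervalIntegral.integral_hasDerivAt_right (a := 0) (b := s)
    (f := fun r => g r * r)
    ((intervalIntegrable_iff_integrableOn_Ioo_of_le hs.le).2
      (hg.mono_set (Ioo_subset_Ioo_right hsb.le)))
    ⟨Ioo 0 b, hsmem, hg.aestronglyMeasurable⟩ (hc.mul continuousAt_id)
  refine ((hderiv.const_mul 2).congr_of_eventuallyEq ?_).congr_deriv (by ring)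
  filter_upwards [Ioi_mem_nhds hs] with y hy
  simp [EKplusR, intervalIntegral.integral_of_le (le_of_lt hy), integral_Ioc_eq_integral_Ioo]

end FirstKind

lemma integrableOn_Ioi_mul_rpow_of_le {f : ℝ → ℝ} {p q t : ℝ} (ht : 0 < t) (hpq : p ≤ q)
    (hf : IntegrableOn (fun r => f r * r ^ q) (Ioi t)) :
    IntegrableOn (fun r => f r * r ^ p) (Ioi t) := by
  have hbdd : IntegrableOn (fun r => f r * r ^ q * r ^ (p - q)) (Ioi t) := by
    refine Integrable.mul_bdd (c := t ^ (p - q)) hf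
      (Measurable.aestronglyMeasurable (by fun_prop)) ?_
    filter_upwards [ae_restrict_mem measurableSet_Ioi] with r hr
    rw [Real.norm_of_nonneg (Real.rpow_nonneg (ht.le.trans (le_of_lt hr)) _)]
    exact Real.rpow_le_rpow_of_nonpos ht (le_of_lt hr) (sub_nonpos.2 hpq)
  refine hbdd.congr_fun (fun r hr => ?_) measurableSet_Ioi
  simp only [mul_assoc, ← Real.rpow_add (ht.trans hr), add_sub_cancel]

section SecondKind

variable {β a t : ℝ} {f : ℝ → ℝ}

lemma EKminusR_eq_integral_truncPow (β : ℝ) (f : ℝ → ℝ) (ht : 0 ≤ t) :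
    EKminusR β f t =
      2 / Real.Gamma β * ∫ r in Ioi 0, truncPow (β - 1) (r ^ 2 - t ^ 2) * (f r * r) := by
  have hvanish (r : ℝ) (hr : r ∈ Ioi 0 \ Ioi t) :
      truncPow (β - 1) (r ^ 2 - t ^ 2) * (f r * r) = 0 := by
    rw [truncPow_sq_sub_sq_of_le _ (le_of_lt hr.1) (not_lt.1 hr.2), zero_mul]
  rw [EKminusR, setIntegral_eq_of_subset_of_forall_sdiff_eq_zero measurableSet_Ioi
    (Ioi_subset_Ioi ht) hvanish]
  congr 1
  refine setIntegral_congr_fun measurableSet_Ioi fun r hr => ?_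
  simp only [truncPow_sq_sub_sq_of_lt _ ht hr, mul_assoc]

lemma sq_rpow_sub_one_mul_self (β : ℝ) {r : ℝ} (hr : 0 < r) :
    (r ^ 2) ^ (β - 1) * r = r ^ (2 * β - 1) := by
  rw [← Real.rpow_natCast_mul hr.le, ← Real.rpow_add_one hr.ne']
  congr 1
  push_cast
  ring

lemma truncPow_sq_sub_sq_le (hβ : 1 ≤ β) (t : ℝ) {r : ℝ} (hr : 0 < r) :
    truncPow (β - 1) (r ^ 2 - t ^ 2) ≤ (r ^ 2) ^ (β - 1) := by
  rw [← truncPow_of_pos (pow_pos hr 2)]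
  exact monotone_truncPow (sub_nonneg.2 hβ) (sub_le_self _ (sq_nonneg t))

lemma integrableOn_truncPow_sub_sq_mul (hβ : 1 ≤ β) (ht : 0 < t)
    (hf : IntegrableOn (fun r => f r * r ^ (2 * β - 1)) (Ioi t)) :
    IntegrableOn (fun r => truncPow (β - 1) (r ^ 2 - t ^ 2) * (f r * r)) (Ioi 0) := by
  refine IntegrableOn.of_forall_sdiff_eq_zero (s := Ioi t) ?_ measurableSet_Ioi ?_
  · have hbdd : IntegrableOn (fun r => truncPow (β - 1) (r ^ 2 - t ^ 2) / (r ^ 2) ^ (β - 1) *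
        (f r * r ^ (2 * β - 1))) (Ioi t) := by
      refine Integrable.bdd_mul (c := 1) hf (Measurable.aestronglyMeasurable (by fun_prop)) ?_
      filter_upwards [ae_restrict_mem measurableSet_Ioi] with r hr
      have hr0 : 0 < r := ht.trans hr
      rw [Real.norm_of_nonneg (div_nonneg (truncPow_nonneg _ _) (by positivity))]
      exact div_le_one_of_le₀ (truncPow_sq_sub_sq_le hβ t hr0) (by positivity)
    refine hbdd.congr_fun (fun r hr => ?_) measurableSet_Ioi
    have hr0 : 0 < r := ht.trans hr
    simp only [← sq_rpow_sub_one_mul_self β hr0]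
    field_simp
  · intro r hr
    rw [truncPow_sq_sub_sq_of_le _ (le_of_lt hr.1) (not_lt.1 hr.2), zero_mul]

lemma continuousAt_EKminusR (hβ : 1 ≤ β) (ha : 0 < a) (hat : a < t)
    (hf : IntegrableOn (fun r => f r * r ^ (2 * β - 1)) (Ioi a)) :
    ContinuousAt (EKminusR β f) t := by
  have ht : 0 < t := ha.trans hat
  have hcont := continuousAt_integral_truncPow (ρ := fun r => -r ^ 2) (b := -a ^ 2)
    (x := -t ^ 2) (h := fun r => f r * r) (sub_nonneg.2 hβ) (by fun_prop)
    (neg_lt_neg (pow_lt_pow_left₀ hat ha.le two_ne_zero))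
    ((ae_restrict_Ioi_sq_ne ht).mono fun r hr => neg_injective.ne hr)
    (by simpa only [neg_sub_neg, IntegrableOn] using integrableOn_truncPow_sub_sq_mul hβ ha hf)
  have hcomp := (hcont.comp (f := fun y : ℝ => -y ^ 2) (by fun_prop)).const_mul
    (2 / Real.Gamma β)
  refine hcomp.congr ?_
  filter_upwards [Ioi_mem_nhds ht] with y hy
  simp only [EKminusR_eq_integral_truncPow β f (le_of_lt hy), Function.comp_apply, neg_sub_neg]

lemma hasDerivAt_EKminusR_add_one (hβ : 1 ≤ β) (ha : 0 < a) (hat : a < t)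
    (hf : IntegrableOn (fun r => f r * r ^ (2 * (β + 1) - 1)) (Ioi a)) :
    HasDerivAt (EKminusR (β + 1) f) (-(2 * t * EKminusR β f t)) t := by
  have ht : 0 < t := ha.trans hat
  have hint := integrableOn_truncPow_sub_sq_mul (by linarith) ht
    (hf.mono_set (Ioi_subset_Ioi hat.le))
  have hint' := integrableOn_truncPow_sub_sq_mul hβ ha
    (integrableOn_Ioi_mul_rpow_of_le ha (by linarith) hf)
  rw [add_sub_cancel_right] at hint
  have hderiv := hasDerivAt_integral_truncPow (γ := β) (ρ := fun r => -r ^ 2) (b := -a ^ 2)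
    (x := -t ^ 2) (h := fun r => f r * r) hβ (by fun_prop)
    (neg_lt_neg (pow_lt_pow_left₀ hat ha.le two_ne_zero))
    ((ae_restrict_Ioi_sq_ne ht).mono fun r hr => neg_injective.ne hr)
    (by simpa only [neg_sub_neg] using! hint) (by simpa only [neg_sub_neg] using! hint')
  have hsq : HasDerivAt (fun y : ℝ => -y ^ 2) (-(2 * t)) t := by
    simpa using (hasDerivAt_pow 2 t).fun_neg
  have hcomp := (hderiv.comp (h := fun y => -y ^ 2) t hsq).const_mul (2 / Real.Gamma (β + 1))
  refine (hcomp.congr_of_eventuallyEq ?_).congr_deriv ?_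
  · filter_upwards [Ioi_mem_nhds ht] with y hy
    simp only [EKminusR_eq_integral_truncPow _ f (le_of_lt hy), add_sub_cancel_right,
      Function.comp_apply, neg_sub_neg]
  · have hΓ : Real.Gamma β ≠ 0 := (Real.Gamma_pos_of_pos (by linarith)).ne'
    rw [EKminusR_eq_integral_truncPow β f ht.le, Real.Gamma_add_one (by positivity)]
    simp only [neg_sub_neg]
    field_simp

lemma hasDerivAt_EKminusR_one (hat : a < t) (hf : IntegrableOn (fun r => f r * r) (Ioi a))
    (hc : ContinuousAt f t) : HasDerivAt (EKminusR 1 f) (-(2 * t * f t)) t := by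
  have hderiv := intervalIntegral.integral_hasDerivAt_right (a := a) (b := t)
    (f := fun r => f r * r)
    ((intervalIntegrable_iff_integrableOn_Ioc_of_le hat.le).2 (hf.mono_set Ioc_subset_Ioi_self))
    ⟨Ioi a, Ioi_mem_nhds hat, hf.aestronglyMeasurable⟩ (hc.mul continuousAt_id)
  refine (((hderiv.const_sub (∫ r in Ioi a, f r * r)).const_mul 2).congr_of_eventuallyEq
    ?_).congr_deriv (by ring)
  filter_upwards [Ioi_mem_nhds hat] with y hy
  rw [← intervalIntegral.integral_Ioi_sub_Ioi hf (le_of_lt hy)]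
  simp [EKminusR]

end SecondKind

section Iteration

lemma eqOn_iterate_of_chain {β : Type*} {S : Set β} {T : (β → ℝ) → β → ℝ}
    (hT : ∀ ⦃F G⦄, EqOn F G S → EqOn (T F) (T G) S) {u : ℕ → β → ℝ} {m : ℕ}
    (hu : ∀ i < m, EqOn (T (u (i + 1))) (u i) S) {F : β → ℝ} (hF : EqOn F (u m) S) :
    EqOn (T^[m] F) (u 0) S := by
  induction m generalizing F with
  | zero => exact hF
  | succ m ih =>
    exact ih (fun i hi => hu i (hi.trans m.lt_succ_self)) ((hT hF).trans (hu m m.lt_succ_self))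

lemma Dop_congr ⦃F G : ℝ → ℝ⦄ (h : EqOn F G (Ioi 0)) : EqOn (Dop F) (Dop G) (Ioi 0) :=
  fun s hs => by rw [Dop, Dop, (h.eventuallyEq_of_mem (Ioi_mem_nhds hs)).deriv_eq]

lemma negDop_congr ⦃F G : ℝ → ℝ⦄ (h : EqOn F G (Ioi 0)) : EqOn (negDop F) (negDop G) (Ioi 0) :=
  fun _ ht => congrArg Neg.neg (Dop_congr h ht)

variable {m : ℕ} {F g : ℝ → ℝ}

lemma iterate_Dop_eqOn_of_eqOn_EKplusR (hm : m ≠ 0) (hc : ContinuousOn g (Ioi 0))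
    (hg : ∀ s > 0, IntegrableOn (fun r => g r * r) (Ioo 0 s))
    (hF : EqOn F (EKplusR m g) (Ioi 0)) : EqOn (Dop^[m] F) g (Ioi 0) := by
  obtain ⟨m, rfl⟩ := Nat.exists_eq_succ_of_ne_zero hm
  have hchain (i : ℕ) :
      EqOn (Dop (EKplusR ((i + 1 : ℕ) + 1) g)) (EKplusR (i + 1 : ℕ) g) (Ioi 0) := by
    intro s (hs : 0 < s)
    have hderiv := hasDerivAt_EKplusR_add_one (β := (i + 1 : ℕ)) (by simp) hs (lt_add_one s)
      (hg _ (by positivity))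
    rw [Dop, hderiv.deriv]
    field_simp
  have hbase : EqOn (Dop (EKplusR 1 g)) g (Ioi 0) := by
    intro s (hs : 0 < s)
    have hderiv := hasDerivAt_EKplusR_one hs (lt_add_one s) (hg _ (by positivity))
      (hc.continuousAt (Ioi_mem_nhds hs))
    rw [Dop, hderiv.deriv]
    field_simp
  rw [Function.iterate_succ_apply']
  have hone : EqOn (Dop^[m] F) (EKplusR 1 g) (Ioi 0) := by
    simpa using eqOn_iterate_of_chain Dop_congr (u := fun i => EKplusR (i + 1 : ℕ) g)
      (fun i _ => by simpa using hchain i) hF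
  exact (Dop_congr hone).trans hbase

lemma iterate_negDop_eq_of_eqOn_EKminusR {t : ℝ} (hm : m ≠ 0) (ht : 0 < t) (hc : ContinuousAt g t)
    (hg : ∀ s > 0, IntegrableOn (fun r => g r * r ^ (2 * (m : ℝ) - 1)) (Ioi s))
    (hF : EqOn F (EKminusR m g) (Ioi 0)) : negDop^[m] F t = g t := by
  obtain ⟨m, rfl⟩ := Nat.exists_eq_succ_of_ne_zero hm
  have hchain (i : ℕ) (hi : i < m) :
      EqOn (negDop (EKminusR ((i + 1 : ℕ) + 1) g)) (EKminusR (i + 1 : ℕ) g) (Ioi 0) := by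
    intro s (hs : 0 < s)
    have him : ((i + 1 : ℕ) : ℝ) + 1 ≤ (m.succ : ℝ) := by exact_mod_cast Nat.succ_le_succ hi
    have hderiv := hasDerivAt_EKminusR_add_one (β := (i + 1 : ℕ)) (by simp) (half_pos hs)
      (half_lt_self hs)
      (integrableOn_Ioi_mul_rpow_of_le (half_pos hs) (by linarith) (hg _ (half_pos hs)))
    rw [negDop, hderiv.deriv]
    field_simp
  have hbase : negDop (EKminusR 1 g) t = g t := by
    have hgr := integrableOn_Ioi_mul_rpow_of_le (half_pos ht) (p := 1) (by push_cast; linarith)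
      (hg _ (half_pos ht))
    have hderiv := hasDerivAt_EKminusR_one (half_lt_self ht) (by simpa using hgr) hc
    rw [negDop, hderiv.deriv]
    field_simp
  rw [Function.iterate_succ_apply']
  have hone : EqOn (negDop^[m] F) (EKminusR 1 g) (Ioi 0) := by
    simpa using eqOn_iterate_of_chain negDop_congr (u := fun i => EKminusR (i + 1 : ℕ) g)
      (fun i hi => by simpa using hchain i hi) hF
  rw [negDop_congr hone ht, hbase]

end Iteration

section TailIntegral

lemma setIntegral_Ioo_zero_rpow {α u : ℝ} (hα : -1 < α) (hu : 0 ≤ u) :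
    ∫ r in Ioo 0 u, r ^ α = u ^ (α + 1) / (α + 1) := by
  rw [← integral_Ioc_eq_integral_Ioo, ← intervalIntegral.integral_of_le hu,
    integral_rpow (.inl hα), Real.zero_rpow (by linarith), sub_zero]

lemma aestronglyMeasurable_of_mul_rpow {S : Set ℝ} (hS : MeasurableSet S) (hpos : S ⊆ Ioi 0)
    {h : ℝ → ℝ} {p : ℝ}
    (hh : AEStronglyMeasurable (fun u => h u * u ^ p) (volume.restrict S)) :
    AEStronglyMeasurable h (volume.restrict S) := by
  have hmul : AEStronglyMeasurable (fun u => h u * u ^ p * u ^ (-p)) (volume.restrict S) :=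
    hh.mul (Measurable.aestronglyMeasurable (by fun_prop))
  refine hmul.congr ?_
  filter_upwards [ae_restrict_mem hS] with u hu
  rw [mul_assoc, ← Real.rpow_add (hpos hu), add_neg_cancel, Real.rpow_zero, mul_one]

lemma integrable_prod_indicator_rpow_mul {h : ℝ → ℝ} {α s : ℝ} (hα : -1 < α)
    (hh : IntegrableOn (fun u => h u * u ^ (α + 1)) (Ioo 0 s)) :
    Integrable (fun p : ℝ × ℝ => (Iio p.2).indicator (· ^ α) p.1 * h p.2)
      ((volume.restrict (Ioo 0 s)).prod (volume.restrict (Ioo 0 s))) := by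
  have hkernel : Measurable fun p : ℝ × ℝ => (Iio p.2).indicator (· ^ α) p.1 :=
    Measurable.indicator (f := fun p : ℝ × ℝ => p.1 ^ α) (s := {p | p.1 < p.2}) (by fun_prop)
      (measurableSet_lt measurable_fst measurable_snd)
  have hmeas : AEStronglyMeasurable h (volume.restrict (Ioo 0 s)) :=
    aestronglyMeasurable_of_mul_rpow measurableSet_Ioo Ioo_subset_Ioi_self hh.1
  refine (integrable_prod_iff' (hkernel.aestronglyMeasurable.mul hmeas.comp_snd)).2 ⟨?_, ?_⟩
  · filter_upwards [ae_restrict_mem measurableSet_Ioo] with u hu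
    have hpow : IntegrableOn (fun r : ℝ => r ^ α) (Ioo 0 s) :=
      (intervalIntegral.integrableOn_Ioo_rpow_iff (hu.1.trans hu.2)).2 hα
    exact (hpow.indicator measurableSet_Iio).mul_const (h u)
  · refine (hh.norm.div_const (α + 1)).congr ?_
    filter_upwards [ae_restrict_mem measurableSet_Ioo] with u hu
    have hnonneg (r : ℝ) (hr : r ∈ Ioo 0 s) :
        ‖(Iio u).indicator (· ^ α) r * h u‖ = (Iio u).indicator (· ^ α) r * |h u| := by
      rw [norm_mul, Real.norm_of_nonneg (indicator_apply_nonneg fun _ => by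
        exact Real.rpow_nonneg hr.1.le α), Real.norm_eq_abs]
    simp only [Pi.mul_apply]
    rw [setIntegral_congr_fun measurableSet_Ioo hnonneg, integral_mul_const,
      setIntegral_indicator measurableSet_Iio, Ioo_inter_Iio, min_eq_right hu.2.le,
      setIntegral_Ioo_zero_rpow hα hu.1.le, norm_mul,
      Real.norm_of_nonneg (Real.rpow_nonneg hu.1.le (α + 1)), Real.norm_eq_abs]
    ring

lemma integrableOn_rpow_mul_integral_Ioi {h : ℝ → ℝ} {α s : ℝ} (hα : -1 < α)
    (h0 : IntegrableOn (fun u => h u * u ^ (α + 1)) (Ioo 0 s))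
    (hinf : ∀ t > 0, IntegrableOn h (Ioi t)) :
    IntegrableOn (fun r => r ^ α * ∫ u in Ioi r, h u) (Ioo 0 s) := by
  rcases le_or_gt s 0 with hs | hs
  · simp [Ioo_eq_empty_of_le hs]
  have hpow : IntegrableOn (fun r : ℝ => r ^ α) (Ioo 0 s) :=
    (intervalIntegral.integrableOn_Ioo_rpow_iff hs).2 hα
  refine ((integrable_prod_indicator_rpow_mul hα h0).integral_prod_left.add
    (hpow.mul_const (∫ u in Ici s, h u))).congr ?_
  filter_upwards [ae_restrict_mem measurableSet_Ioo] with r hr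
  have hsplit : ∫ u in Ioi r, h u = (∫ u in Ioo r s, h u) + ∫ u in Ici s, h u := by
    rw [← Ioo_union_Ici_eq_Ioi hr.2, setIntegral_union (by
      exact disjoint_left.2 fun u hu hsu => hu.2.not_ge hsu) measurableSet_Ici
      ((hinf r hr.1).mono_set Ioo_subset_Ioi_self) ((hinf r hr.1).mono_set (Ici_subset_Ioi.2 hr.2))]
  have hkernel (u : ℝ) : (Iio u).indicator (· ^ α) r * h u = (Ioi r).indicator (r ^ α * h ·) u := by
    by_cases hru : r < u <;> simp [hru]
  simp only [Pi.add_apply, hkernel]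
  rw [setIntegral_indicator measurableSet_Ioi, Ioo_inter_Ioi, max_eq_right hr.1.le,
    integral_const_mul, hsplit, mul_add]

end TailIntegral

section SecondKindBound

variable {β α s : ℝ} {f : ℝ → ℝ}

lemma integrableOn_abs_mul_rpow {S : Set ℝ} {p : ℝ} (hS : MeasurableSet S) (hpos : S ⊆ Ioi 0)
    (hf : IntegrableOn (fun r => f r * r ^ p) S) : IntegrableOn (fun r => |f r| * r ^ p) S := by
  refine IntegrableOn.congr_fun hf.abs (fun r hr => ?_) hS
  simp only [abs_mul, abs_of_nonneg (Real.rpow_nonneg (le_of_lt (hpos hr)) p)]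

lemma abs_EKminusR_le {r : ℝ} (hβ : 1 ≤ β) (hr : 0 < r)
    (hf : IntegrableOn (fun u => f u * u ^ (2 * β - 1)) (Ioi r)) :
    |EKminusR β f r| ≤ 2 / Real.Gamma β * ∫ u in Ioi r, |f u| * u ^ (2 * β - 1) := by
  have hΓ : 0 < Real.Gamma β := Real.Gamma_pos_of_pos (by linarith)
  rw [EKminusR, abs_mul, abs_of_pos (div_pos two_pos hΓ)]
  refine mul_le_mul_of_nonneg_left ?_ (div_pos two_pos hΓ).le
  have hnorm := integrableOn_abs_mul_rpow measurableSet_Ioi (Ioi_subset_Ioi hr.le) hf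
  refine norm_integral_le_of_norm_le (f := fun u => (u ^ 2 - r ^ 2) ^ (β - 1) * f u * u) hnorm ?_
  filter_upwards [ae_restrict_mem measurableSet_Ioi] with u hu
  have hu0 : 0 < u := hr.trans hu
  rw [← truncPow_sq_sub_sq_of_lt _ hr.le hu, norm_mul, norm_mul,
    Real.norm_of_nonneg (truncPow_nonneg _ _), Real.norm_of_nonneg hu0.le, Real.norm_eq_abs,
    ← sq_rpow_sub_one_mul_self β hu0]
  calc truncPow (β - 1) (u ^ 2 - r ^ 2) * |f u| * u ≤ (u ^ 2) ^ (β - 1) * |f u| * u := by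
        gcongr
        exact truncPow_sq_sub_sq_le hβ r hu0
    _ = |f u| * ((u ^ 2) ^ (β - 1) * u) := by ring

lemma continuousOn_EKminusR (hβ : 1 ≤ β)
    (hinf : ∀ t > 0, IntegrableOn (fun r => f r * r ^ (2 * β - 1)) (Ioi t)) :
    ContinuousOn (EKminusR β f) (Ioi 0) := fun t (ht : 0 < t) =>
  (continuousAt_EKminusR hβ (half_pos ht) (half_lt_self ht)
    (hinf _ (half_pos ht))).continuousWithinAt

lemma integrableOn_rpow_mul_EKminusR (hβ : 1 ≤ β) (hα : -1 < α)
    (h0 : IntegrableOn (fun r => f r * r ^ (2 * β + α)) (Ioo 0 s))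
    (hinf : ∀ t > 0, IntegrableOn (fun r => f r * r ^ (2 * β - 1)) (Ioi t)) :
    IntegrableOn (fun r => r ^ α * EKminusR β f r) (Ioo 0 s) := by
  have h0' : IntegrableOn (fun u => |f u| * u ^ (2 * β - 1) * u ^ (α + 1)) (Ioo 0 s) := by
    refine (integrableOn_abs_mul_rpow measurableSet_Ioo Ioo_subset_Ioi_self h0).congr_fun
      (fun u hu => ?_) measurableSet_Ioo
    simp only [mul_assoc, ← Real.rpow_add hu.1]
    ring_nf
  have hinf' (t : ℝ) (ht : 0 < t) :=
    integrableOn_abs_mul_rpow measurableSet_Ioi (Ioi_subset_Ioi ht.le) (hinf t ht)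
  have hmeas : AEStronglyMeasurable (EKminusR β f) (volume.restrict (Ioo 0 s)) :=
    ((continuousOn_EKminusR hβ hinf).mono Ioo_subset_Ioi_self).aestronglyMeasurable
      measurableSet_Ioo
  refine ((integrableOn_rpow_mul_integral_Ioi hα h0' hinf').const_mul
    (2 / Real.Gamma β)).mono' (Measurable.aestronglyMeasurable (by fun_prop) |>.mul hmeas) ?_
  filter_upwards [ae_restrict_mem measurableSet_Ioo] with r hr
  rw [norm_mul, Real.norm_of_nonneg (Real.rpow_nonneg hr.1.le _), Real.norm_eq_abs,
    mul_left_comm]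
  exact mul_le_mul_of_nonneg_left (abs_EKminusR_le hβ hr.1 (hinf r hr.1))
    (Real.rpow_nonneg hr.1.le _)

end SecondKindBound

section WeightedIntegrability

variable {f : ℝ → ℝ} {p q a : ℝ}

lemma integrableOn_mul_rpow_of_subset_Icc {S : Set ℝ} {x y : ℝ} (hx : 0 < x)
    (hS : MeasurableSet S) (hSxy : S ⊆ Icc x y) (hf : IntegrableOn (fun r => f r * r ^ p) S) :
    IntegrableOn (fun r => f r * r ^ q) S := by
  have hcont : ContinuousOn (fun r : ℝ => r ^ (q - p)) (Icc x y) := fun r hr =>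
    (Real.continuousAt_rpow_const r _ (.inl (hx.trans_le hr.1).ne')).continuousWithinAt
  refine (hf.mul_continuousOn_of_subset hcont hS isCompact_Icc hSxy).congr_fun
    (fun r hr => ?_) hS
  simp only [mul_assoc, ← Real.rpow_add (hx.trans_le (hSxy hr).1), add_sub_cancel]

lemma integrableOn_Ioi_mul_rpow (h0 : IntegrableOn (fun r => f r * r ^ p) (Ioo 0 a))
    (hinf : IntegrableOn (fun r => f r * r ^ q) (Ioi a)) {t : ℝ} (ht : 0 < t) :
    IntegrableOn (fun r => f r * r ^ q) (Ioi t) := by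
  have hmid : IntegrableOn (fun r => f r * r ^ q) (Ioo t a) :=
    integrableOn_mul_rpow_of_subset_Icc ht measurableSet_Ioo Ioo_subset_Icc_self
      (h0.mono_set (Ioo_subset_Ioo_left ht.le))
  have hIci := (integrableOn_Ici_iff_integrableOn_Ioi (by finiteness)).2 hinf
  refine (hmid.union hIci).mono_set fun r hr => ?_
  exact (lt_or_ge r a).imp (fun hra => ⟨hr, hra⟩) id

lemma integrableOn_Ioo_mul_rpow (ha : 0 < a)
    (h0 : IntegrableOn (fun r => f r * r ^ p) (Ioo 0 a))
    (hinf : IntegrableOn (fun r => f r * r ^ q) (Ioi a)) (s : ℝ) :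
    IntegrableOn (fun r => f r * r ^ p) (Ioo 0 s) := by
  have hIci := (integrableOn_Ici_iff_integrableOn_Ioi (by finiteness)).2 hinf
  have hmid : IntegrableOn (fun r => f r * r ^ p) (Ico a s) :=
    integrableOn_mul_rpow_of_subset_Icc ha measurableSet_Ico Ico_subset_Icc_self
      (hIci.mono_set Ico_subset_Ici_self)
  refine (h0.union hmid).mono_set fun r hr => ?_
  exact (lt_or_ge r a).imp (fun hra => ⟨hr.1, hra⟩) fun har => ⟨har, hr.2⟩

end WeightedIntegrability

lemma iterate_negDop_rpow_neg_mul_iterate_Dop {p q : ℕ} {γ a t : ℝ} {F f : ℝ → ℝ} (hp : p ≠ 0)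
    (hq : q ≠ 0) (hγ : -2 < γ) (ha : 0 < a) (ht : 0 < t) (hc : ContinuousAt f t)
    (h1 : IntegrableOn (fun r => f r * r ^ (2 * q + γ + 1)) (Ioo 0 a))
    (h2 : IntegrableOn (fun r => f r * r ^ (2 * (q : ℝ) - 1)) (Ioi a))
    (hF : EqOn F (EKplusR p fun r => r ^ γ * EKminusR q f r) (Ioi 0)) :
    negDop^[q] (fun r => r ^ (-γ) * Dop^[p] F r) t = f t := by
  have hq1 : (1 : ℝ) ≤ q := by exact_mod_cast Nat.one_le_iff_ne_zero.2 hq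
  have hinf (s : ℝ) (hs : s > 0) := integrableOn_Ioi_mul_rpow h1 h2 hs
  have hcont : ContinuousOn (fun r => r ^ γ * EKminusR q f r) (Ioi 0) :=
    (continuousOn_id.rpow_const fun r hr => .inl (ne_of_gt hr)).mul
      (continuousOn_EKminusR hq1 hinf)
  have hint (s : ℝ) (_ : s > 0) : IntegrableOn (fun r => r ^ γ * EKminusR q f r * r) (Ioo 0 s) := by
    have hγ1 := integrableOn_rpow_mul_EKminusR (α := γ + 1) hq1 (by linarith)
      (by simpa only [add_assoc] using integrableOn_Ioo_mul_rpow ha h1 h2 s) hinf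
    refine hγ1.congr_fun (fun r hr => ?_) measurableSet_Ioo
    simp only [Real.rpow_add_one hr.1.ne', mul_right_comm]
  have hDop := iterate_Dop_eqOn_of_eqOn_EKplusR hp hcont hint hF
  refine iterate_negDop_eq_of_eqOn_EKminusR hq ht hc hinf fun r (hr : 0 < r) => ?_
  simp only [hDop hr, ← mul_assoc, ← Real.rpow_add hr, neg_add_cancel, Real.rpow_zero, one_mul]

lemma EKplusR_const_mul (β c : ℝ) (g : ℝ → ℝ) (t : ℝ) :
    EKplusR β (fun r => c * g r) t = c * EKplusR β g t := by
  simp only [EKplusR, mul_assoc, mul_left_comm _ c, integral_const_mul]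

lemma EKminusR_const_mul (β c : ℝ) (g : ℝ → ℝ) (t : ℝ) :
    EKminusR β (fun r => c * g r) t = c * EKminusR β g t := by
  simp only [EKminusR, mul_assoc, mul_left_comm _ c, integral_const_mul]

/-- The constant `c̃₁ = π^{k/2} Γ((n−k)/2)/Γ((n−j−k)/2)` of the mixed Radon transform `IjkR`. -/
noncomputable def radonConst (n j k : ℕ) : ℝ :=
  Real.pi ^ ((k : ℝ) / 2) * Real.Gamma (((n : ℝ) - k) / 2) / Real.Gamma (((n : ℝ) - j - k) / 2)

lemma radonConst_pos {n j k : ℕ} (h : j + k < n) : 0 < radonConst n j k := by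
  have hjkn : (j : ℝ) + k < n := by exact_mod_cast h
  have hnum := Real.Gamma_pos_of_pos (s := ((n : ℝ) - k) / 2) (by linarith [j.cast_nonneg (α := ℝ)])
  have hden := Real.Gamma_pos_of_pos (s := ((n : ℝ) - j - k) / 2) (by linarith)
  unfold radonConst
  positivity

lemma rpow_mul_IjkR (n j k ℓ : ℕ) (f : ℝ → ℝ) {s : ℝ} (hs : 0 < s) :
    s ^ ((n : ℝ) - k - 2) * IjkR n j k ℓ f s = EKplusR ((j : ℝ) / 2)
      (fun r => r ^ ((ℓ : ℝ) - 2) *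
        EKminusR ((k : ℝ) / 2) (fun u => radonConst n j k * f u) r) s := by
  simp only [EKminusR_const_mul, mul_left_comm _ (radonConst n j k), EKplusR_const_mul]
  rw [IjkR, radonConst]
  field_simp

theorem mixed_radon_radial_inversion_general (n j k ℓ : ℕ) (hj : 1 ≤ j) (hk : 1 ≤ k)
    (hje : Even j) (hke : Even k) (hℓ : 1 ≤ ℓ) (hn : n = j + k + ℓ) (f₀ : ℝ → ℝ)
    (a : ℝ) (ha : 0 < a)
    (h1 : IntegrableOn (fun t => f₀ t * t ^ ((n : ℝ) - j - 1)) (Ioo (0 : ℝ) a))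
    (h2 : IntegrableOn (fun t => f₀ t * t ^ ((k : ℝ) - 1)) (Ioi a))
    (t : ℝ) (ht : 0 < t) (hc : ContinuousAt f₀ t) :
    f₀ t = (Real.pi ^ ((k : ℝ) / 2) * Real.Gamma (((n : ℝ) - k) / 2) /
        Real.Gamma (((n : ℝ) - j - k) / 2))⁻¹ *
      (negDop^[k / 2] (fun r => r ^ (2 - (n : ℝ) + j + k) *
        (Dop^[j / 2] (fun s => s ^ ((n : ℝ) - k - 2) * IjkR n j k ℓ f₀ s)) r)) t := by
  have hnR : (n : ℝ) = j + k + ℓ := by exact_mod_cast hn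
  have hℓR : (1 : ℝ) ≤ ℓ := by exact_mod_cast hℓ
  have hj2 : ((j / 2 : ℕ) : ℝ) = j / 2 := Nat.cast_div hje.two_dvd two_ne_zero
  have hk2 : ((k / 2 : ℕ) : ℝ) = k / 2 := Nat.cast_div hke.two_dvd two_ne_zero
  have hj0 : j / 2 ≠ 0 := (Nat.div_pos (Nat.le_of_dvd hj hje.two_dvd) two_pos).ne'
  have hk0 : k / 2 ≠ 0 := (Nat.div_pos (Nat.le_of_dvd hk hke.two_dvd) two_pos).ne'
  have hexp₁ : 2 * ((k / 2 : ℕ) : ℝ) + (ℓ - 2) + 1 = n - j - 1 := by linarith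
  have hexp₂ : 2 * ((k / 2 : ℕ) : ℝ) - 1 = k - 1 := by linarith
  have hexp₃ : 2 - (n : ℝ) + j + k = -(ℓ - 2) := by linarith
  have hinv := iterate_negDop_rpow_neg_mul_iterate_Dop hj0 hk0 (γ := ℓ - 2) (by linarith) ha ht
    (hc.const_mul (radonConst n j k))
    (by simpa only [IntegrableOn, hexp₁, mul_assoc] using h1.const_mul (radonConst n j k))
    (by simpa only [IntegrableOn, hexp₂, mul_assoc] using h2.const_mul (radonConst n j k))
    (fun s hs => by simpa only [hj2, hk2] using rpow_mul_IjkR n j k ℓ f₀ hs)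
  rw [hexp₃, hinv, ← radonConst, inv_mul_cancel_left₀ (radonConst_pos (by omega)).ne']

/-- Inversion of the mixed Radon transform of a radial profile for even `j`, `k`:
`f₀(t) = c̃₁^{−1} ((−D)^{k/2} r^{2−n+j+k} D^{j/2} s^{n−k−2} (I_{j,k} f₀))(t)`. -/
theorem mixed_radon_radial_inversion (n j k ℓ : ℕ) (hj : 1 ≤ j) (hk : 1 ≤ k)
    (hje : Even j) (hke : Even k) (hℓ : 1 ≤ ℓ) (hn : n = j + k + ℓ)
    (f₀ : ℝ → ℝ) (hpos : ∀ t, 0 ≤ f₀ t) (hc : ContinuousOn f₀ (Ioi (0:ℝ)))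
    (a : ℝ) (ha : 0 < a)
    (h1 : IntegrableOn (fun t => f₀ t * t ^ ((n : ℝ) - j - 1)) (Ioo (0:ℝ) a))
    (h2 : IntegrableOn (fun t => f₀ t * t ^ ((k : ℝ) - 1)) (Ioi a)) :
    ∀ t > (0:ℝ),
      f₀ t = (Real.pi ^ ((k : ℝ) / 2) * Real.Gamma (((n : ℝ) - k) / 2) /
          Real.Gamma (((n : ℝ) - j - k) / 2))⁻¹ *
        (negDop^[k / 2] (fun r => r ^ (2 - (n : ℝ) + j + k) *
          (Dop^[j / 2] (fun s => s ^ ((n : ℝ) - k - 2) * IjkR n j k ℓ f₀ s)) r)) t := by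
  intro t ht
  exact mixed_radon_radial_inversion_general n j k ℓ hj hk hje hke hℓ hn f₀ a ha h1 h2 t ht
    (hc.continuousAt (Ioi_mem_nhds ht))
end
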